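/- Extended convergent formula for harmonic sums: Let x ∈ ℝ with x > 0 and let a ∈ ℕ₀. Then the series ∑_{k=1}^{∞} (−1)^{k+1} (∑_{l=1}^{k} ((−1)^l/(l+a)) S_k^{(1)}(l) B_{l+a}({x})) / ((x+1)(x+2)⋯(x+k)) converges absolutely, and ∑_{k=1}^{⌊x⌋} 1/k = log(x) + γ − ∑_{k=1}^{a} B_k({x})/(k x^k) + (1/x^a) ∑_{k=1}^{∞} (−1)^{k+1} (∑_{l=1}^{k} ((−1)^l/(l+a)) S_k^{(1)}(l) B_{l+a}({x})) / ((x+1)(x+2)⋯(x+k)). -/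

import Mathlib

open Finset in
/-- Unsigned Stirling numbers of the first kind, via the rising-factorial recurrence:
`z(z+1)⋯(z+k−1) = ∑ l, stirling1Unsigned k l * z^l`. -/
def stirling1Unsigned : ℕ → ℕ → ℕ
  | 0, 0 => 1
  | 0, _ + 1 => 0
  | k + 1, 0 => k * stirling1Unsigned k 0
  | k + 1, l + 1 => stirling1Unsigned k l + k * stirling1Unsigned k (l + 1)

/-- The Stirling numbers of the first kind `S_k^{(1)}(l)` of the paper, defined by
`z(z+1)⋯(z+k−1) = (−1)^k ∑_{l=0}^k (−1)^l S_k^{(1)}(l) z^l`, i.e.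
`S_k^{(1)}(l) = (−1)^{k−l}` times the coefficient of `z^l` in the rising factorial. -/
def S1 (k l : ℕ) : ℤ := (-1) ^ (k + l) * stirling1Unsigned k l

/-- The `n`-th Bernoulli polynomial `B_n(x) = ∑_{k=0}^n C(n,k) B_k x^{n−k}`,
with `B_1 = −1/2`. -/
noncomputable def bernPoly (n : ℕ) (x : ℝ) : ℝ :=
  ∑ k ∈ Finset.range (n + 1), (n.choose k : ℝ) * (bernoulli k : ℝ) * x ^ (n - k)

/-- The generalized binomial coefficient `C(w,k) = w(w−1)⋯(w−k+1)/k!`. -/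
noncomputable def cchoose (w : ℂ) (k : ℕ) : ℂ :=
  (∏ i ∈ Finset.range k, (w - i)) / (k.factorial : ℂ)

/-- The rising product `(z+1)(z+2)⋯(z+k)`. -/
noncomputable def risingProd (z : ℂ) (k : ℕ) : ℂ :=
  ∏ i ∈ Finset.range k, (z + i + 1)

/-- The rising product `(x+1)(x+2)⋯(x+k)` over the reals. -/
noncomputable def risingProdR (x : ℝ) (k : ℕ) : ℝ :=
  ∏ i ∈ Finset.range k, (x + i + 1)

/-- The digamma function `ψ(z) = Γ′(z)/Γ(z)`. -/
noncomputable def digamma (z : ℂ) : ℂ := deriv Complex.Gamma z / Complex.Gamma z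


theorem eh_c_zero_right (k : ℕ) : stirling1Unsigned (k + 1) 0 = 0 := by
  induction k with
  | zero => simp [stirling1Unsigned]
  | succ k ih => rw [stirling1Unsigned, ih, mul_zero]

theorem eh_c_gt (k l : ℕ) (h : k < l) : stirling1Unsigned k l = 0 := by
  induction k generalizing l with
  | zero =>
    obtain ⟨m, rfl⟩ : ∃ m, l = m + 1 := ⟨l - 1, by omega⟩
    simp [stirling1Unsigned]
  | succ k ih =>
    obtain ⟨m, rfl⟩ : ∃ m, l = m + 1 := ⟨l - 1, by omega⟩
    rw [stirling1Unsigned, ih m (by omega), ih (m + 1) (by omega), mul_zero, add_zero]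

theorem eh_c_sum (k : ℕ) (g : ℕ → ℝ) :
    ∑ i ∈ Finset.range (k + 1 + 1), (stirling1Unsigned (k + 1 + 1) (i + 1) : ℝ) * g i
      = ∑ i ∈ Finset.range (k + 1), (stirling1Unsigned (k + 1) (i + 1) : ℝ) * g (i + 1)
        + (k + 1) * ∑ i ∈ Finset.range (k + 1), (stirling1Unsigned (k + 1) (i + 1) : ℝ) * g i := by
  have h1 : ∀ i, (stirling1Unsigned (k + 1 + 1) (i + 1) : ℝ) * g i
      = (stirling1Unsigned (k + 1) i : ℝ) * g i
        + (k + 1) * ((stirling1Unsigned (k + 1) (i + 1) : ℝ) * g i) := by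
    intro i
    rw [stirling1Unsigned]; push_cast; ring
  simp_rw [h1]
  rw [Finset.sum_add_distrib, Finset.sum_range_succ', ← Finset.mul_sum,
    Finset.sum_range_succ (fun i => (stirling1Unsigned (k + 1) (i + 1) : ℝ) * g i) (k + 1),
    eh_c_gt (k + 1) (k + 1 + 1) (by omega), eh_c_zero_right]
  simp

/-- rising factorial -/
noncomputable def ehr (n : ℕ) (z : ℝ) : ℝ := ∏ i ∈ Finset.range n, (z + i)

theorem ehr_succ (n : ℕ) (z : ℝ) : ehr (n + 1) z = ehr n z * (z + n) := by
  simp [ehr, Finset.prod_range_succ]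

theorem ehr_succ' (n : ℕ) (z : ℝ) : ehr (n + 1) z = z * ehr n (z + 1) := by
  simp only [ehr, Finset.prod_range_succ']
  rw [mul_comm]; simp only [Nat.cast_zero, add_zero]
  congr 1
  refine Finset.prod_congr rfl fun i _ => ?_
  push_cast; ring

theorem ehr_cont (n : ℕ) : Continuous (ehr n) := by
  unfold ehr; fun_prop

theorem eh_pow_sum (n : ℕ) (z : ℝ) :
    ∑ i ∈ Finset.range (n + 1), (stirling1Unsigned (n + 1) (i + 1) : ℝ) * z ^ i
      = ehr n (z + 1) := by
  induction n with
  | zero => simp [stirling1Unsigned, ehr]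
  | succ n ih =>
    rw [eh_c_sum, ehr_succ, ← ih]
    have : ∀ i, (stirling1Unsigned (n + 1) (i + 1) : ℝ) * z ^ (i + 1)
      = z * ((stirling1Unsigned (n + 1) (i + 1) : ℝ) * z ^ i) := by intro i; ring
    simp_rw [this, ← Finset.mul_sum]; ring

theorem eh_bern (n : ℕ) (x : ℝ) : bernPoly n x = bernoulliFun n x := by
  unfold bernPoly bernoulliFun Polynomial.bernoulli
  rw [Polynomial.map_sum, Polynomial.eval_finsetSum]
  refine Finset.sum_congr rfl fun i _ => ?_
  simp [Polynomial.map_monomial, Polynomial.eval_monomial]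
  left
  ring

theorem eh_bern_add_one (n : ℕ) (x : ℝ) :
    bernoulliFun n (1 + x) = bernoulliFun n x + n * x ^ (n - 1) := by
  simpa [bernoulliFun, Polynomial.aeval_comp]
    using congr_arg (·.aeval x) (Polynomial.bernoulli_comp_one_add_X n)

/-- the numerators -/
noncomputable def ehb (a k : ℕ) (t : ℝ) : ℝ :=
  ∑ i ∈ Finset.range k,
    (stirling1Unsigned k (i + 1) : ℝ) * (bernoulliFun (i + 1 + a) t / ((i + 1 + a : ℕ) : ℝ))

theorem ehb_one (a : ℕ) (t : ℝ) : ehb a 1 t = bernoulliFun (a + 1) t / ((a + 1 : ℕ) : ℝ) := by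
  simp [ehb, stirling1Unsigned, add_comm]

theorem ehb_rec (a k : ℕ) (t : ℝ) :
    ehb a (k + 2) t = ehb (a + 1) (k + 1) t + (k + 1) * ehb a (k + 1) t := by
  unfold ehb
  rw [eh_c_sum k (fun i => bernoulliFun (i + 1 + a) t / ((i + 1 + a : ℕ) : ℝ))]
  congr 1
  refine Finset.sum_congr rfl fun i _ => ?_
  rw [show i + 1 + 1 + a = i + 1 + (a + 1) by ring]

theorem ehb_zero (n : ℕ) (t : ℝ) :
    ehb 0 (n + 1) t = (ehr (n + 1) t - ∫ z in (0:ℝ)..1, ehr (n + 1) z) / (n + 1) := by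
  have hn : (n + 1 : ℝ) ≠ 0 := by positivity
  set F : Polynomial ℝ := (∑ i ∈ Finset.range (n + 1),
    Polynomial.C ((stirling1Unsigned (n + 1) (i + 1) : ℝ) / ((i + 1 : ℕ) : ℝ)) *
      (Polynomial.bernoulli (i + 1)).map (algebraMap ℚ ℝ))
    - Polynomial.C (1 / (n + 1 : ℝ)) * ∏ i ∈ Finset.range (n + 1), (Polynomial.X + Polynomial.C (i : ℝ)) with hF
  have hev : ∀ s, F.eval s = ehb 0 (n + 1) s - ehr (n + 1) s / (n + 1) := by
    intro s
    rw [hF, Polynomial.eval_sub, Polynomial.eval_finsetSum, Polynomial.eval_mul, Polynomial.eval_prod]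
    simp only [Polynomial.eval_mul, Polynomial.eval_C, Polynomial.eval_add, Polynomial.eval_X]
    unfold ehb ehr
    congr 1
    · refine Finset.sum_congr rfl fun i _ => ?_
      unfold bernoulliFun
      simp only [add_zero]
      ring
    · ring
  have hper : ∀ s, F.eval (1 + s) = F.eval s := by
    intro s
    rw [hev, hev]
    have e1 : ehb 0 (n + 1) (1 + s) = ehb 0 (n + 1) s + ehr n (s + 1) := by
      rw [← eh_pow_sum]
      unfold ehb
      rw [← Finset.sum_add_distrib]
      refine Finset.sum_congr rfl fun i _ => ?_
      rw [eh_bern_add_one]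
      have : ((i + 1 + 0 : ℕ) : ℝ) ≠ 0 := by positivity
      field_simp
      simp
    have e2 : ehr (n + 1) (1 + s) = ehr n (s + 1) * (s + 1 + n) := by
      rw [add_comm 1 s, ehr_succ]
    rw [e1, e2, ehr_succ']
    field_simp
    ring
  have hnat : ∀ m : ℕ, F.eval (m : ℝ) = F.eval 0 := by
    intro m
    induction m with
    | zero => simp
    | succ m ih => rw [← ih, ← hper (m : ℝ)]; push_cast; rw [add_comm]
  have hconst : F = Polynomial.C (F.eval 0) := by
    apply Polynomial.eq_of_infinite_eval_eq
    refine (Set.infinite_range_of_injective (Nat.cast_injective (R := ℝ))).mono ?_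
    rintro _ ⟨m, rfl⟩
    simp [hnat]
  have hc : ∀ s, F.eval s = F.eval 0 := by
    intro s
    conv_lhs => rw [hconst]
    simp
  have hint : ∫ s in (0:ℝ)..1, F.eval s = F.eval 0 := by
    simp_rw [hc]; simp
  have hint2 : ∫ s in (0:ℝ)..1, F.eval s = - (∫ z in (0:ℝ)..1, ehr (n + 1) z) / (n + 1) := by
    simp_rw [hev]
    rw [intervalIntegral.integral_sub, intervalIntegral.integral_div]
    · have : ∫ s in (0:ℝ)..1, ehb 0 (n + 1) s = 0 := by
        unfold ehb
        rw [intervalIntegral.integral_finsetSum]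
        · refine Finset.sum_eq_zero fun i _ => ?_
          rw [intervalIntegral.integral_const_mul, intervalIntegral.integral_div,
            integral_bernoulliFun_eq_zero (by omega)]
          simp
        · intro i _
          exact Continuous.intervalIntegrable (by fun_prop) _ _
      rw [this]; ring
    · exact Continuous.intervalIntegrable (by unfold ehb; fun_prop) _ _
    · exact Continuous.intervalIntegrable ((ehr_cont _).div_const _) _ _
  have := hev t
  rw [hc, ← hint, hint2] at this
  rw [sub_div]
  linarith [neg_div (n + 1 : ℝ) (∫ z in (0:ℝ)..1, ehr (n + 1) z)]

/-- normalised coefficients -/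
noncomputable def ehE : ℕ → ℕ → ℝ → ℕ → ℝ
  | 0, m, z, j => ehr (j + m) z / ((j + m).factorial : ℝ)
  | a + 1, m, z, j => ((m : ℝ) - 1 + z) * ehE a m z j - m * ehE a (m + 1) z j

theorem ehE_zero (m : ℕ) (z : ℝ) (j : ℕ) :
    ehE 0 m z j = ehr (j + m) z / ((j + m).factorial : ℝ) := by rw [ehE]

theorem ehE_succ (a m : ℕ) (z : ℝ) (j : ℕ) :
    ehE (a + 1) m z j = ((m : ℝ) - 1 + z) * ehE a m z j - m * ehE a (m + 1) z j := by rw [ehE]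

theorem ehE_rec (a m : ℕ) (z : ℝ) (j : ℕ) :
    ehE (a + 1) m z j = (j + 1) * (ehE a m z (j + 1) - ehE a m z j) := by
  induction a generalizing m with
  | zero =>
    rw [ehE_succ, ehE_zero, ehE_zero, ehE_zero, show j + 1 + m = j + m + 1 by ring,
      show j + (m + 1) = j + m + 1 by ring, ehr_succ, Nat.factorial_succ]
    have : ((j + m).factorial : ℝ) ≠ 0 := by positivity
    have h2 : ((j : ℝ) + m + 1) ≠ 0 := by positivity
    push_cast
    field_simp
    ring
  | succ a ih =>
    rw [ehE_succ (a + 1)]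
    linear_combination ((m : ℝ) - 1 + z) * ih m - m * ih (m + 1)
      - (j + 1) * (ehE_succ a m z (j + 1) - ehE_succ a m z j)

theorem ehE_cont (a m j : ℕ) : Continuous (fun z => ehE a m z j) := by
  induction a generalizing m with
  | zero => simp_rw [ehE_zero]; exact (ehr_cont _).div_const _
  | succ a ih =>
    simp_rw [ehE_succ]
    have := ih m
    have := ih (m + 1)
    fun_prop

theorem ehr_nonneg (n : ℕ) (z : ℝ) (h0 : 0 ≤ z) : 0 ≤ ehr n z := by
  unfold ehr
  exact Finset.prod_nonneg fun i _ => by positivity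

theorem ehr_le (n : ℕ) (z : ℝ) (h0 : 0 ≤ z) (h1 : z ≤ 1) : ehr n z ≤ n.factorial := by
  induction n with
  | zero => simp [ehr]
  | succ n ih =>
    rw [ehr_succ, Nat.factorial_succ, mul_comm]
    push_cast
    have := ehr_nonneg n z h0
    apply mul_le_mul _ ih this (by positivity)
    linarith

theorem ehE_bound (a m : ℕ) : ∃ C : ℝ, 0 ≤ C ∧ ∀ z : ℝ, 0 ≤ z → z ≤ 1 → ∀ j, |ehE a m z j| ≤ C := by
  induction a generalizing m with
  | zero =>
    refine ⟨1, by norm_num, fun z h0 h1 j => ?_⟩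
    rw [ehE_zero, abs_of_nonneg (div_nonneg (ehr_nonneg _ _ h0) (by positivity))]
    rw [div_le_one (by positivity)]
    exact ehr_le _ _ h0 h1
  | succ a ih =>
    obtain ⟨C1, hC1, h1⟩ := ih m
    obtain ⟨C2, hC2, h2⟩ := ih (m + 1)
    refine ⟨(m + 2) * C1 + m * C2, by positivity, fun z hz0 hz1 j => ?_⟩
    rw [ehE_succ]
    refine (abs_sub _ _).trans ?_
    rw [abs_mul, abs_mul, Nat.abs_cast]
    have hm : (0 : ℝ) ≤ m := by positivity
    have : |(m : ℝ) - 1 + z| ≤ m + 2 := by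
      rw [abs_le]; constructor <;> linarith
    have := h1 z hz0 hz1 j
    have := h2 z hz0 hz1 j
    gcongr

theorem ehb_eq (a j : ℕ) (t : ℝ) :
    ehb a (j + 1) t = j.factorial * (ehE a 1 t j - ∫ z in (0:ℝ)..1, ehE a 1 z j) := by
  induction a generalizing j with
  | zero =>
    rw [ehb_zero]
    simp_rw [ehE_zero]
    rw [intervalIntegral.integral_div, Nat.factorial_succ]
    have : (j.factorial : ℝ) ≠ 0 := by positivity
    have h2 : ((j : ℝ) + 1) ≠ 0 := by positivity
    push_cast
    field_simp
  | succ a ih =>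
    have h := ehb_rec a j t
    rw [ih (j + 1), ih j, Nat.factorial_succ] at h
    simp_rw [ehE_rec]
    rw [intervalIntegral.integral_const_mul, intervalIntegral.integral_sub
      ((ehE_cont a 1 (j + 1)).intervalIntegrable _ _) ((ehE_cont a 1 j).intervalIntegrable _ _)]
    push_cast at h
    linear_combination -h

theorem ehb_bound (a : ℕ) : ∃ C : ℝ, 0 ≤ C ∧ ∀ t : ℝ, 0 ≤ t → t ≤ 1 → ∀ j,
    |ehb a (j + 1) t| ≤ C * j.factorial := by
  obtain ⟨C, hC, h⟩ := ehE_bound a 1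
  refine ⟨C + C, by positivity, fun t h0 h1 j => ?_⟩
  rw [ehb_eq, abs_mul, Nat.abs_cast, mul_comm]
  gcongr
  refine (abs_sub _ _).trans (add_le_add (h t h0 h1 j) ?_)
  have := intervalIntegral.norm_integral_le_of_norm_le_const (a := (0:ℝ)) (b := 1) (C := C)
    (f := fun z => ehE a 1 z j) (by
      intro z hz
      rw [Set.uIoc_of_le zero_le_one] at hz
      exact h z hz.1.le hz.2 j)
  simpa using this

theorem ehR_pos (y : ℝ) (hy : 0 < y) (k : ℕ) : 0 < risingProdR y k := by
  unfold risingProdR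
  exact Finset.prod_pos fun i _ => by positivity

theorem ehR_succ (y : ℝ) (k : ℕ) : risingProdR y (k + 1) = risingProdR y k * (y + k + 1) := by
  simp [risingProdR, Finset.prod_range_succ]

theorem ehR_succ' (y : ℝ) (k : ℕ) : risingProdR y (k + 1) = (y + 1) * risingProdR (y + 1) k := by
  simp only [risingProdR, Finset.prod_range_succ']
  rw [mul_comm]; simp only [Nat.cast_zero, add_zero]
  congr 1
  refine Finset.prod_congr rfl fun i _ => ?_
  push_cast; ring

noncomputable def ehw (y : ℝ) (k : ℕ) : ℝ := (k.factorial : ℝ) / risingProdR y k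

theorem ehw_pos (y : ℝ) (hy : 0 < y) (k : ℕ) : 0 < ehw y k :=
  div_pos (by positivity) (ehR_pos y hy k)

theorem ehw_succ (y : ℝ) (hy : 0 < y) (k : ℕ) :
    ehw y (k + 1) = ehw y k * ((k + 1) / (y + k + 1)) := by
  unfold ehw
  rw [ehR_succ, Nat.factorial_succ]
  have := ehR_pos y hy k
  have h2 : y + k + 1 ≠ 0 := by positivity
  push_cast
  field_simp

theorem ehw_diff (y : ℝ) (hy : 0 < y) (k : ℕ) :
    (k.factorial : ℝ) / risingProdR y (k + 1) = (ehw y k - ehw y (k + 1)) / y := by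
  rw [ehw_succ y hy]
  unfold ehw
  rw [ehR_succ]
  have := ehR_pos y hy k
  have h2 : y + k + 1 ≠ 0 := by positivity
  field_simp
  ring

theorem ehw_le (y : ℝ) (hy : 0 < y) (k : ℕ) :
    ehw y k * (1 + y * ∑ i ∈ Finset.range k, 1 / ((i : ℝ) + 1)) ≤ 1 := by
  induction k with
  | zero => simp [ehw, risingProdR]
  | succ k ih =>
    refine le_trans ?_ ih
    rw [ehw_succ y hy, mul_assoc]
    have := ehw_pos y hy k
    apply mul_le_mul_of_nonneg_left _ this.le
    rw [Finset.sum_range_succ]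
    have hS : 0 ≤ ∑ i ∈ Finset.range k, 1 / ((i : ℝ) + 1) :=
      Finset.sum_nonneg fun i _ => by positivity
    set S := ∑ i ∈ Finset.range k, 1 / ((i : ℝ) + 1)
    rw [div_mul_eq_mul_div, div_le_iff₀ (by positivity)]
    have h2 : (k : ℝ) + 1 ≠ 0 := by positivity
    have : ((k : ℝ) + 1) * (1 + y * (S + 1 / ((k : ℝ) + 1))) = (k + 1) * (1 + y * S) + y := by
      field_simp
      ring
    rw [this]
    nlinarith [mul_nonneg (mul_pos hy hy).le hS]

open Filter Topology in
theorem ehw_tendsto (y : ℝ) (hy : 0 < y) : Tendsto (ehw y) atTop (𝓝 0) := by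
  have h1 : Tendsto (fun k : ℕ => 1 + y * ∑ i ∈ Finset.range k, 1 / ((i : ℝ) + 1)) atTop atTop :=
    tendsto_atTop_add_const_left _ _
      (Real.tendsto_sum_range_one_div_nat_succ_atTop.const_mul_atTop hy)
  refine squeeze_zero (fun k => (ehw_pos y hy k).le) (fun k => ?_) h1.inv_tendsto_atTop
  have hS : 0 ≤ ∑ i ∈ Finset.range k, 1 / ((i : ℝ) + 1) :=
    Finset.sum_nonneg fun i _ => by positivity
  rw [Pi.inv_apply, inv_eq_one_div, le_div_iff₀ (by positivity)]
  exact ehw_le y hy k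

theorem ehw_hasSum (y : ℝ) (hy : 0 < y) :
    HasSum (fun k : ℕ => (k.factorial : ℝ) / risingProdR y (k + 1)) (1 / y) := by
  rw [hasSum_iff_tendsto_nat_of_nonneg
    (fun k => div_nonneg (by positivity) (ehR_pos y hy _).le)]
  simp_rw [ehw_diff y hy, ← Finset.sum_div, Finset.sum_range_sub']
  have := ((ehw_tendsto y hy).const_sub (ehw y 0)).div_const y
  simpa [ehw, risingProdR] using this

theorem eh_summable (a : ℕ) (t y : ℝ) (h0 : 0 ≤ t) (h1 : t ≤ 1) (hy : 0 < y) :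
    Summable (fun k : ℕ => |ehb a (k + 1) t / risingProdR y (k + 1)|) := by
  obtain ⟨C, hC, h⟩ := ehb_bound a
  refine Summable.of_nonneg_of_le (fun k => abs_nonneg _) (fun k => ?_)
    ((ehw_hasSum y hy).summable.mul_left C)
  rw [abs_div, abs_of_pos (ehR_pos y hy (k + 1)), ← mul_div_assoc]
  have := ehR_pos y hy (k + 1)
  gcongr
  exact h t h0 h1 k

noncomputable def ehT (a : ℕ) (t y : ℝ) : ℝ := ∑' k : ℕ, ehb a (k + 1) t / risingProdR y (k + 1)

theorem ehT_hasSum (a : ℕ) (t y : ℝ) (h0 : 0 ≤ t) (h1 : t ≤ 1) (hy : 0 < y) :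
    HasSum (fun k : ℕ => ehb a (k + 1) t / risingProdR y (k + 1)) (ehT a t y) :=
  (eh_summable a t y h0 h1 hy).of_abs.hasSum

theorem ehT_bound (a : ℕ) (t : ℝ) (h0 : 0 ≤ t) (h1 : t ≤ 1) :
    ∃ C : ℝ, ∀ y, 0 < y → |ehT a t y| ≤ C / y := by
  obtain ⟨C, hC, h⟩ := ehb_bound a
  refine ⟨C, fun y hy => ?_⟩
  have hs := (ehw_hasSum y hy).mul_left C
  rw [mul_one_div] at hs
  unfold ehT
  rw [← Real.norm_eq_abs]
  refine tsum_of_norm_bounded hs fun k => ?_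
  rw [Real.norm_eq_abs, abs_div, abs_of_pos (ehR_pos y hy (k + 1)), ← mul_div_assoc]
  have := ehR_pos y hy (k + 1)
  gcongr
  exact h t h0 h1 k

open Filter Topology in
theorem ehT_rec (a : ℕ) (t y : ℝ) (h0 : 0 ≤ t) (h1 : t ≤ 1) (hy : 0 < y) :
    y * ehT a t y = bernoulliFun (a + 1) t / ((a + 1 : ℕ) : ℝ) + ehT (a + 1) t y := by
  have hA := ((ehT_hasSum a t y h0 h1 hy).tendsto_sum_nat.comp (tendsto_add_atTop_nat 1)).const_mul y
  have hB := (ehT_hasSum (a + 1) t y h0 h1 hy).tendsto_sum_nat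
  have hpart : ∀ K : ℕ, y * ∑ k ∈ Finset.range (K + 1), ehb a (k + 1) t / risingProdR y (k + 1)
      = ehb a 1 t + ∑ k ∈ Finset.range K, ehb (a + 1) (k + 1) t / risingProdR y (k + 1)
        - (K + 1) * ehb a (K + 1) t / risingProdR y (K + 1) := by
    intro K
    induction K with
    | zero =>
      have : y + 1 ≠ 0 := by positivity
      simp [risingProdR]
      field_simp
      ring
    | succ K ih =>
      rw [Finset.sum_range_succ, mul_add, ih, Finset.sum_range_succ, ehb_rec, ehR_succ y (K + 1)]
      have := ehR_pos y hy (K + 1)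
      have h2 : y + (K + 1 : ℕ) + 1 ≠ 0 := by positivity
      push_cast at h2 ⊢
      field_simp
      ring
  have hC : Tendsto (fun K : ℕ => ((K : ℝ) + 1) * ehb a (K + 1) t / risingProdR y (K + 1))
      atTop (𝓝 0) := by
    obtain ⟨C, hC, h⟩ := ehb_bound a
    have h3 := ((ehw_tendsto y hy).comp (tendsto_add_atTop_nat 1)).const_mul C
    rw [mul_zero] at h3
    refine squeeze_zero_norm (fun K => ?_) h3
    have := ehR_pos y hy (K + 1)
    rw [Real.norm_eq_abs, abs_div, abs_of_pos this, abs_mul, abs_of_nonneg (by positivity : (0:ℝ) ≤ (K:ℝ) + 1)]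
    simp only [Function.comp, ehw]
    rw [← mul_div_assoc, Nat.factorial_succ]
    push_cast
    rw [mul_left_comm C]
    have := h t h0 h1 K
    gcongr
  have hD := (hB.const_add (ehb a 1 t)).sub hC
  rw [sub_zero, ehb_one] at hD
  refine tendsto_nhds_unique hA (hD.congr fun K => ?_)
  simp only [Function.comp]
  rw [hpart, ehb_one]

theorem eh_partial (y z : ℝ) (hy : 0 < y) (hz : z ≤ 1) (K : ℕ) :
    ∑ k ∈ Finset.range K, ehr (k + 1) z / risingProdR y (k + 2)
      = (z / (y + 1) - ehr (K + 1) z / risingProdR y (K + 1)) / (y + 1 - z) := by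
  have h1 : y + 1 - z ≠ 0 := by linarith
  induction K with
  | zero => simp [ehr, risingProdR]
  | succ K ih =>
    rw [Finset.sum_range_succ, ih, ehR_succ y (K + 1), ehr_succ (K + 1)]
    have := ehR_pos y hy (K + 1)
    have h2 : y + (K + 1 : ℕ) + 1 ≠ 0 := by positivity
    have h3 : y + 1 ≠ 0 := by positivity
    push_cast at h2 ⊢
    field_simp
    ring

theorem eh_u_bound (y z : ℝ) (hy : 0 < y) (h0 : 0 ≤ z) (h1 : z ≤ 1) (K : ℕ) :
    |ehr (K + 1) z / risingProdR y (K + 1) / (y + 1 - z)| ≤ ehw y (K + 1) / y := by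
  have := ehR_pos y hy (K + 1)
  rw [abs_of_nonneg (div_nonneg (div_nonneg (ehr_nonneg _ _ h0) this.le) (by linarith))]
  unfold ehw
  have h3 := ehr_le (K + 1) z h0 h1
  gcongr
  linarith

theorem eh_integral (y : ℝ) (hy : 0 < y) :
    ∫ z in (0:ℝ)..1, z / (y + 1) / (y + 1 - z) = Real.log ((y + 1) / y) - 1 / (y + 1) := by
  have e : ∀ z ∈ Set.uIcc (0:ℝ) 1, z / (y + 1) / (y + 1 - z) = (y + 1 - z)⁻¹ - 1 / (y + 1) := by
    intro z hz
    rw [Set.uIcc_of_le zero_le_one] at hz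
    have h1 : y + 1 - z ≠ 0 := by linarith [hz.2]
    field_simp
    ring
  rw [intervalIntegral.integral_congr e, intervalIntegral.integral_sub,
    intervalIntegral.integral_comp_sub_left (fun u => u⁻¹) (y + 1)]
  · rw [integral_inv_of_pos (by linarith) (by linarith)]
    simp
  · apply ContinuousOn.intervalIntegrable
    intro z hz
    rw [Set.uIcc_of_le zero_le_one] at hz
    have h1 : y + 1 - z ≠ 0 := by linarith [hz.2]
    exact ContinuousAt.continuousWithinAt (by fun_prop (disch := assumption))
  · simp

open Filter Topology in
theorem ehT_diff (t y : ℝ) (h0 : 0 ≤ t) (h1 : t ≤ 1) (hy : 0 < y) :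
    ehT 0 t y - ehT 0 t (y + 1) = 1 / (y + 1 - t) - Real.log ((y + 1) / y) := by
  have hs := ((ehT_hasSum 0 t y h0 h1 hy).sub
    (ehT_hasSum 0 t (y + 1) h0 h1 (by linarith))).tendsto_sum_nat
  have hterm : ∀ k : ℕ, ehb 0 (k + 1) t / risingProdR y (k + 1)
      - ehb 0 (k + 1) t / risingProdR (y + 1) (k + 1)
      = ehr (k + 1) t / risingProdR y (k + 2)
        - ∫ z in (0:ℝ)..1, ehr (k + 1) z / risingProdR y (k + 2) := by
    intro k
    rw [intervalIntegral.integral_div, ← sub_div, ehb_zero]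
    set D := ehr (k + 1) t - ∫ z in (0:ℝ)..1, ehr (k + 1) z
    have e1 := ehR_succ' y (k + 1)
    have e2 := ehR_succ y (k + 1)
    have p1 := ehR_pos y hy (k + 1)
    have p2 := ehR_pos (y + 1) (by linarith) (k + 1)
    have p3 : y + (k + 1 : ℕ) + 1 ≠ 0 := by positivity
    have p4 : y + 1 ≠ 0 := by positivity
    have p5 : (k + 1 : ℝ) ≠ 0 := by positivity
    have e3 : risingProdR (y + 1) (k + 1) = risingProdR y (k + 1) * (y + (k + 1 : ℕ) + 1) / (y + 1) := by
      rw [← e2, e1]; field_simp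
    rw [e2, e3]
    push_cast at p3 ⊢
    field_simp
    ring
  have hcont : ∀ (K : ℕ), IntervalIntegrable
      (fun z => ehr K z / risingProdR y K / (y + 1 - z)) MeasureTheory.volume 0 1 := by
    intro K
    apply ContinuousOn.intervalIntegrable
    intro z hz
    rw [Set.uIcc_of_le zero_le_one] at hz
    have h1 : y + 1 - z ≠ 0 := by linarith [hz.2]
    have := (ehr_cont K).continuousAt (x := z)
    exact ContinuousAt.continuousWithinAt (by fun_prop (disch := assumption))
  have hone : ∀ z, z / (y + 1) = ehr 1 z / risingProdR y 1 := by
    intro z; simp [ehr, risingProdR]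
  have hpart : ∀ K : ℕ, ∑ k ∈ Finset.range K, (ehb 0 (k + 1) t / risingProdR y (k + 1)
      - ehb 0 (k + 1) t / risingProdR (y + 1) (k + 1))
      = (t / (y + 1) / (y + 1 - t) - ehr (K + 1) t / risingProdR y (K + 1) / (y + 1 - t))
        - ((Real.log ((y + 1) / y) - 1 / (y + 1))
          - ∫ z in (0:ℝ)..1, ehr (K + 1) z / risingProdR y (K + 1) / (y + 1 - z)) := by
    intro K
    simp_rw [hterm]
    rw [Finset.sum_sub_distrib, eh_partial y t hy h1, sub_div]
    congr 1
    rw [← intervalIntegral.integral_finsetSum, ← eh_integral y hy, ← intervalIntegral.integral_sub]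
    · apply intervalIntegral.integral_congr
      intro z hz
      rw [Set.uIcc_of_le zero_le_one] at hz
      simp only
      rw [eh_partial y z hy hz.2, sub_div]
    · simp_rw [hone]; exact hcont 1
    · exact hcont (K + 1)
    · intro k _
      exact ((ehr_cont _).div_const _).intervalIntegrable _ _
  have hw : Tendsto (fun K : ℕ => ehw y (K + 1) / y) atTop (𝓝 0) := by
    have := ((ehw_tendsto y hy).comp (tendsto_add_atTop_nat 1)).div_const y
    simpa using this
  have l1 : Tendsto (fun K : ℕ => ehr (K + 1) t / risingProdR y (K + 1) / (y + 1 - t)) atTop (𝓝 0) :=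
    squeeze_zero_norm (fun K => eh_u_bound y t hy h0 h1 K) hw
  have l2 : Tendsto (fun K : ℕ => ∫ z in (0:ℝ)..1, ehr (K + 1) z / risingProdR y (K + 1) / (y + 1 - z))
      atTop (𝓝 0) := by
    refine squeeze_zero_norm (fun K => ?_) hw
    have := intervalIntegral.norm_integral_le_of_norm_le_const (a := (0:ℝ)) (b := 1)
      (C := ehw y (K + 1) / y)
      (f := fun z => ehr (K + 1) z / risingProdR y (K + 1) / (y + 1 - z)) (by
        intro z hz
        rw [Set.uIoc_of_le zero_le_one] at hz
        exact eh_u_bound y z hy hz.1.le hz.2 K)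
    simpa using this
  have hl := (l1.const_sub (t / (y + 1) / (y + 1 - t))).sub
    (l2.const_sub (Real.log ((y + 1) / y) - 1 / (y + 1)))
  have := tendsto_nhds_unique hs (hl.congr fun K => (hpart K).symm)
  rw [this]
  have q1 : y + 1 - t ≠ 0 := by linarith
  have q2 : y + 1 ≠ 0 := by linarith
  have : t / (y + 1) / (y + 1 - t) = 1 / (y + 1 - t) - 1 / (y + 1) := by
    field_simp; ring
  rw [this]; ring

open Filter Topology in
theorem eh_base (x : ℝ) (hx : 0 < x) :
    (∑ k ∈ Finset.Icc 1 ⌊x⌋₊, (1 : ℝ) / k)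
      = Real.log x + Real.eulerMascheroniConstant - ehT 0 (Int.fract x) x := by
  set t := Int.fract x with ht
  set N := ⌊x⌋₊ with hN
  have h0 : 0 ≤ t := Int.fract_nonneg x
  have h1 : t ≤ 1 := (Int.fract_lt_one x).le
  have hxN : x = N + t := by
    rw [ht, hN, Int.fract, natCast_floor_eq_intCast_floor hx.le]; ring
  have hharm : ∀ n : ℕ, (∑ k ∈ Finset.Icc 1 n, (1 : ℝ) / k) = (harmonic n : ℝ) := by
    intro n
    rw [harmonic_eq_sum_Icc]; push_cast
    simp
  have hM : ∀ M : ℕ, ehT 0 t x = ((harmonic (M + N) : ℝ) - harmonic N)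
      - (Real.log (x + M) - Real.log x) + ehT 0 t (x + M) := by
    intro M
    induction M with
    | zero => simp
    | succ M ih =>
      have hp : 0 < x + M := by positivity
      have := ehT_diff t (x + M) h0 h1 hp
      rw [Real.log_div (by positivity) (by positivity)] at this
      rw [ih, show M + 1 + N = M + N + 1 by ring, harmonic_succ]
      have e : x + (M : ℝ) + 1 - t = ((M + N + 1 : ℕ) : ℝ) := by
        push_cast; linarith
      rw [e] at this
      push_cast at this ⊢
      rw [← add_assoc, ← one_div]
      linarith
  have t1 : Tendsto (fun M : ℕ => (harmonic (M + N) : ℝ) - Real.log ((M + N : ℕ) : ℝ)) atTop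
      (𝓝 Real.eulerMascheroniConstant) :=
    Real.tendsto_harmonic_sub_log.comp (tendsto_add_atTop_nat N)
  have t2 : Tendsto (fun M : ℕ => Real.log (((M + N : ℕ) : ℝ) + t) - Real.log ((M + N : ℕ) : ℝ))
      atTop (𝓝 0) :=
    (Real.tendsto_log_comp_add_sub_log t).comp
      (tendsto_natCast_atTop_atTop.comp (tendsto_add_atTop_nat N))
  have t3 : Tendsto (fun M : ℕ => ehT 0 t (x + M)) atTop (𝓝 0) := by
    obtain ⟨C, hC⟩ := ehT_bound 0 t h0 h1
    refine squeeze_zero_norm (fun M => hC (x + M) (by positivity)) ?_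
    exact Tendsto.const_div_atTop
      (tendsto_atTop_add_const_left _ _ tendsto_natCast_atTop_atTop) C
  have t4 := ((t1.sub t2).add t3).add_const (Real.log x - harmonic N)
  have t5 : Tendsto (fun _ : ℕ => ehT 0 t x) atTop (𝓝 (ehT 0 t x)) := tendsto_const_nhds
  have := tendsto_nhds_unique t5 (t4.congr fun M => by
    rw [hM M, show x + (M : ℝ) = ((M + N : ℕ) : ℝ) + t by push_cast; linarith]
    ring)
  rw [hharm, this]
  ring


theorem eh_step (x : ℝ) (hx : 0 < x) (a : ℕ) :
    ehT 0 (Int.fract x) x = (∑ k ∈ Finset.Icc 1 a, bernPoly k (Int.fract x) / (k * x ^ k))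
      + 1 / x ^ a * ehT a (Int.fract x) x := by
  induction a with
  | zero => simp
  | succ a ih =>
    rw [ih, Finset.sum_Icc_succ_top (by omega), eh_bern]
    have h := ehT_rec a (Int.fract x) x (Int.fract_nonneg x) (Int.fract_lt_one x).le hx
    have : (a + 1 : ℝ) ≠ 0 := by positivity
    push_cast at h ⊢
    have h3 : ehT (a + 1) (Int.fract x) x
        = x * ehT a (Int.fract x) x - bernoulliFun (a + 1) (Int.fract x) / (a + 1) := by linarith
    rw [h3]
    field_simp
    ring

open Finset in
/-- Extended convergent formula for harmonic sums (formula (31) of Theorem 5.1). -/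
theorem extended_harmonic_formula (x : ℝ) (hx : 0 < x) (a : ℕ) :
    Summable (fun k : ℕ =>
      |(-1 : ℝ) ^ (k + 1 + 1) *
          (∑ l ∈ Icc 1 (k + 1),
            (-1 : ℝ) ^ l / (l + a) * (S1 (k + 1) l : ℝ) * bernPoly (l + a) (Int.fract x)) /
        risingProdR x (k + 1)|) ∧
    (∑ k ∈ Icc 1 ⌊x⌋₊, (1 : ℝ) / k) =
      Real.log x + Real.eulerMascheroniConstant -
        (∑ k ∈ Icc 1 a, bernPoly k (Int.fract x) / (k * x ^ k)) +
        1 / x ^ a *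
          ∑' k : ℕ,
            (-1 : ℝ) ^ (k + 1 + 1) *
                (∑ l ∈ Icc 1 (k + 1),
                  (-1 : ℝ) ^ l / (l + a) * (S1 (k + 1) l : ℝ) *
                    bernPoly (l + a) (Int.fract x)) /
              risingProdR x (k + 1) := by
  set t := Int.fract x with ht
  have h0 : 0 ≤ t := Int.fract_nonneg x
  have h1 : t ≤ 1 := (Int.fract_lt_one x).le
  have hterm : ∀ k : ℕ, (-1 : ℝ) ^ (k + 1 + 1) *
          (∑ l ∈ Icc 1 (k + 1),
            (-1 : ℝ) ^ l / (l + a) * (S1 (k + 1) l : ℝ) * bernPoly (l + a) t) /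
        risingProdR x (k + 1) = -(ehb a (k + 1) t / risingProdR x (k + 1)) := by
    intro k
    rw [← neg_div]
    congr 1
    have hI : Icc 1 (k + 1) = Ico (0 + 1) (k + 1 + 1) := by
      ext l; simp only [mem_Icc, mem_Ico]; omega
    rw [hI, ← Finset.sum_Ico_add', ← Finset.range_eq_Ico]
    unfold ehb
    rw [Finset.mul_sum, ← Finset.sum_neg_distrib]
    refine Finset.sum_congr rfl fun i _ => ?_
    rw [eh_bern, S1]
    have e : ((-1 : ℝ) ^ (k + 1 + 1)) * ((-1) ^ (i + 1) * (-1) ^ (k + 1 + (i + 1))) = -1 := by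
      rw [← pow_add, ← pow_add]
      exact Odd.neg_one_pow ⟨k + i + 2, by ring⟩
    push_cast
    linear_combination (stirling1Unsigned (k + 1) (i + 1) : ℝ) *
      (bernoulliFun (i + 1 + a) t / ((i : ℝ) + 1 + a)) * e
  simp_rw [hterm]
  refine ⟨by simpa only [abs_neg] using eh_summable a t x h0 h1 hx, ?_⟩
  rw [tsum_neg]
  change _ = _ - _ + 1 / x ^ a * -(ehT a t x)
  rw [eh_base x hx, eh_step x hx a]
  ring
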